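/- Failure of Korn's second inequality in L^1 (Ornstein): Let Ω be the open unit ball of ℝ². There exists no constant C > 0 such that for every smooth compactly supported vector field u : ℝ² → ℝ² with support contained in Ω, the infimum over antisymmetric 2×2 real matrices A of the integral over Ω of ‖Du(x) − A‖_F dx is bounded by C times the integral over Ω of ‖(Du(x) + Du(x)ᵀ)/2‖_F dx. Equivalently, for every C > 0 there exists such a smooth compactly supported u with inf_A ∫_Ω ‖Du − A‖_F dx > C ∫_Ω ‖(Du + Duᵀ)/2‖_F dx. -/

import Mathlib

open Matrix MeasureTheory

/-- The Jacobian matrix of `u : ℝ² → ℝ²` at `x`: `(jacobian u x) i j = ∂uᵢ/∂xⱼ (x)`. -/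
noncomputable def jacobian (u : EuclideanSpace ℝ (Fin 2) → EuclideanSpace ℝ (Fin 2))
    (x : EuclideanSpace ℝ (Fin 2)) : Matrix (Fin 2) (Fin 2) ℝ :=
  fun i j => fderiv ℝ u x (EuclideanSpace.single j 1) i

/-- Frobenius norm of a real `2 × 2` matrix. -/
noncomputable def frobNorm (M : Matrix (Fin 2) (Fin 2) ℝ) : ℝ :=
  Real.sqrt (∑ i, ∑ j, (M i j) ^ 2)

/-!
The proof follows the rank-one convexity argument of Conti, Faraco and Maggi. For `K > 0` consider
the 1-homogeneous integrand `F(M) = K (|M₀₀| + |M₁₁| + |M₀₁ + M₁₀|) - |M₀₁| - |M₁₀|`, and call `q`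
admissible at `A` if some compactly supported perturbation `u` of the affine map `A` on a rectangle
makes the average of `F(A + Du)` at most `q`. Inserting a fine sawtooth between layers of optimal
perturbations shows that the least admissible value is convex along the coordinate rank-one
directions, and it inherits the homogeneity of `F`. Starting from `q` at `!![0, 1; 1, 0]`, doubling
gives `2q` at `!![0, 2; 2, 0]`; splitting against `!![0, -2; 2, 0]`, where `F = -4`, gives
`3q/2 - 1` at `!![0, 1; 2, 0]`; splitting against `!![0, 1; -1, 0]`, where `F = -2`, gives
`q - 4/3` at `!![0, 1; 1, 0]` again. Iterating, the admissible values are unbounded below, so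
`∫ F(Du) < 0` for some test map `u`: the symmetric gradient does not control `∂₁u₀` and `∂₀u₁` in
`L¹`. Since these derivatives have mean zero, subtracting a constant matrix at most halves their
`L¹` norms.
-/

section

open Set
open scoped ContDiff NNReal Manifold

section TestMap

variable {E E' V : Type*} [NormedAddCommGroup E] [NormedSpace ℝ E]
  [NormedAddCommGroup E'] [NormedSpace ℝ E'] [NormedAddCommGroup V] [NormedSpace ℝ V]

/-- `IsTestMap Ω u` is the unbundled form of `u ∈ C_c^∞(Ω; V)`: the map `u` is defined and smooth on
the whole space and its support is a compact subset of `Ω`. -/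
structure IsTestMap (Ω : Set E) (u : E → V) : Prop where
  contDiff : ContDiff ℝ ∞ u
  hasCompactSupport : HasCompactSupport u
  tsupport_subset : tsupport u ⊆ Ω

namespace IsTestMap

variable {Ω Ω' : Set E} {u v : E → V}

lemma zero (Ω : Set E) : IsTestMap Ω (fun _ ↦ (0 : V)) where
  contDiff := contDiff_const
  hasCompactSupport := .zero
  tsupport_subset := by simp [tsupport]

lemma mono (hu : IsTestMap Ω u) (h : Ω ⊆ Ω') : IsTestMap Ω' u :=
  ⟨hu.contDiff, hu.hasCompactSupport, hu.tsupport_subset.trans h⟩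

lemma add (hu : IsTestMap Ω u) (hv : IsTestMap Ω v) : IsTestMap Ω (fun x ↦ u x + v x) where
  contDiff := hu.contDiff.add hv.contDiff
  hasCompactSupport := hu.hasCompactSupport.add hv.hasCompactSupport
  tsupport_subset := (tsupport_add u v).trans (union_subset hu.tsupport_subset hv.tsupport_subset)

lemma continuousLinearMap_comp (L : V →L[ℝ] E') (hu : IsTestMap Ω u) :
    IsTestMap Ω (fun x ↦ L (u x)) where
  contDiff := L.contDiff.comp hu.contDiff
  hasCompactSupport := hu.hasCompactSupport.comp_left (map_zero L)
  tsupport_subset := (tsupport_comp_subset (map_zero L) u).trans hu.tsupport_subset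

lemma const_smul (c : ℝ) (hu : IsTestMap Ω u) : IsTestMap Ω (fun x ↦ c • u x) :=
  hu.continuousLinearMap_comp (c • ContinuousLinearMap.id ℝ V)

lemma comp_homeomorph (hu : IsTestMap Ω u) (φ : E' ≃ₜ E) (hφ : ContDiff ℝ ∞ φ) :
    IsTestMap (φ ⁻¹' Ω) (fun x ↦ u (φ x)) where
  contDiff := hu.contDiff.comp hφ
  hasCompactSupport := hu.hasCompactSupport.comp_homeomorph φ
  tsupport_subset :=
    (tsupport_comp_eq_preimage u φ).trans_subset (preimage_mono hu.tsupport_subset)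

lemma comp_sub_right (hu : IsTestMap Ω u) (c : E) :
    IsTestMap ((fun x ↦ x - c) ⁻¹' Ω) (fun x ↦ u (x - c)) :=
  hu.comp_homeomorph (Homeomorph.subRight c) (contDiff_id.sub contDiff_const)

lemma differentiable (hu : IsTestMap Ω u) : Differentiable ℝ u :=
  hu.contDiff.differentiable (by simp)

lemma continuous_fderiv (hu : IsTestMap Ω u) : Continuous (fderiv ℝ u) :=
  hu.contDiff.continuous_fderiv (by simp)

lemma fderiv_eq_zero (hu : IsTestMap Ω u) {x : E} (hx : x ∉ Ω) : fderiv ℝ u x = 0 :=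
  fderiv_of_notMem_tsupport ℝ fun h ↦ hx (hu.tsupport_subset h)

lemma integrable [MeasurableSpace E] [OpensMeasurableSpace E] {μ : Measure E}
    [IsFiniteMeasureOnCompacts μ] (hu : IsTestMap Ω u) : Integrable u μ :=
  hu.contDiff.continuous.integrable_of_hasCompactSupport hu.hasCompactSupport

lemma integrable_fderiv [MeasurableSpace E] [OpensMeasurableSpace E] {μ : Measure E}
    [IsFiniteMeasureOnCompacts μ] (hu : IsTestMap Ω u) : Integrable (fderiv ℝ u) μ :=
  hu.continuous_fderiv.integrable_of_hasCompactSupport (hu.hasCompactSupport.fderiv ℝ)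

lemma integral_fderiv_eq_zero [FiniteDimensional ℝ E] [MeasurableSpace E] [BorelSpace E]
    {μ : Measure E} [μ.IsAddHaarMeasure] {φ : E → ℝ} (hφ : IsTestMap Ω φ) (e : E) :
    ∫ x, fderiv ℝ φ x e ∂μ = 0 := by
  have hcont : Continuous fun x ↦ fderiv ℝ φ x e := hφ.continuous_fderiv.clm_apply continuous_const
  simpa using integral_mul_fderiv_eq_neg_fderiv_mul_of_integrable (μ := μ)
    (f := fun _ : E ↦ (1 : ℝ)) (g := φ) (v := e) (by simp)
    (by simpa using
      hcont.integrable_of_hasCompactSupport (hφ.hasCompactSupport.fderiv_apply ℝ e))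
    (by simpa using hφ.integrable) (fun x _ ↦ differentiableAt_const _)
    (fun x _ ↦ hφ.differentiable x)

lemma exists_rescale (hu : IsTestMap Ω u) (hΩ' : IsOpen Ω') (hne : Ω'.Nonempty) :
    ∃ R > (0 : ℝ), ∃ x₀, IsTestMap Ω' (fun x ↦ R⁻¹ • u (R • (x - x₀))) := by
  obtain ⟨x₀, hx₀⟩ := hne
  obtain ⟨ε, hε, hball⟩ := Metric.isOpen_iff.1 hΩ' x₀ hx₀
  obtain ⟨M, hM, hMu⟩ := hu.hasCompactSupport.isBounded.exists_pos_norm_lt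
  have hR : 0 < M / ε := div_pos hM hε
  refine ⟨M / ε, hR, x₀, ?_⟩
  have husupp : IsTestMap (Metric.ball 0 M) u :=
    ⟨hu.contDiff, hu.hasCompactSupport, fun x hx ↦ mem_ball_zero_iff.2 (hMu x hx)⟩
  refine (((husupp.comp_homeomorph (Homeomorph.smulOfNeZero (M / ε) hR.ne')
    (contDiff_const_smul (M / ε))).comp_sub_right x₀).const_smul (M / ε)⁻¹).mono fun x hx ↦ hball ?_
  have hx' : ‖(M / ε) • (x - x₀)‖ < M := mem_ball_zero_iff.1 hx
  rw [norm_smul, Real.norm_of_nonneg hR.le, div_mul_eq_mul_div, div_lt_iff₀ hε] at hx'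
  exact mem_ball_iff_norm.2 (lt_of_mul_lt_mul_left hx' hM.le)

end IsTestMap

lemma exists_isTestMap_integral_abs_sub_indicator_le [FiniteDimensional ℝ E] [MeasurableSpace E]
    [BorelSpace E] {μ : Measure E} [μ.Regular] {Ω : Set E} (hΩ : IsOpen Ω) (hΩfin : μ Ω ≠ ⊤)
    {δ : ℝ} (hδ : 0 < δ) :
    ∃ β : E → ℝ, IsTestMap Ω β ∧ ∫ x, |β x - Ω.indicator 1 x| ∂μ ≤ δ := by
  obtain ⟨K, hKΩ, hK, hKδ⟩ := hΩ.measurableSet.exists_isCompact_sdiff_lt hΩfin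
    (ENNReal.ofReal_pos.2 hδ).ne'
  obtain ⟨L, hL, hKL, hLΩ⟩ := exists_compact_between hK hΩ hKΩ
  obtain ⟨β, hβK, hβL, hβI⟩ :=
    exists_contMDiffMap_one_nhds_of_subset_interior 𝓘(ℝ, E) (n := ⊤) hK.isClosed hKL
  refine ⟨β, ⟨contMDiff_iff_contDiff.1 β.contMDiff, .intro hL hβL,
    (closure_minimal (fun x ↦ not_imp_comm.1 (hβL x)) hL.isClosed).trans hLΩ⟩, ?_⟩
  have hmeas : MeasurableSet (Ω \ K) := hΩ.measurableSet.diff hK.measurableSet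
  have hle (x : E) : |β x - Ω.indicator 1 x| ≤ (Ω \ K).indicator 1 x := by
    by_cases hxΩ : x ∈ Ω
    · by_cases hxK : x ∈ K
      · simp [hxΩ, hxK, hβK.self_of_nhdsSet x hxK]
      · rw [indicator_of_mem hxΩ, indicator_of_mem (s := Ω \ K) ⟨hxΩ, hxK⟩,
          Pi.one_apply, abs_le]
        constructor <;> linarith [(hβI x).1, (hβI x).2]
    · simp [hxΩ, hβL x fun hxL ↦ hxΩ (hLΩ hxL)]
  calc ∫ x, |β x - Ω.indicator 1 x| ∂μ ≤ ∫ x, (Ω \ K).indicator 1 x ∂μ :=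
        integral_mono_of_nonneg (.of_forall fun _ ↦ abs_nonneg _)
          ((integrable_indicator_iff hmeas).2 (integrableOn_const (hKδ.trans_le le_top).ne))
          (.of_forall hle)
    _ = μ.real (Ω \ K) := integral_indicator_one hmeas
    _ ≤ δ := ENNReal.toReal_le_of_le_ofReal hδ.le hKδ.le

lemma IsTestMap.exists_hasDerivAt_eq {a b : ℝ} {η : ℝ → ℝ} (hη : IsTestMap (Ioo a b) η)
    (hη0 : ∫ y, η y = 0) : ∃ G : ℝ → ℝ, IsTestMap (Ioo a b) G ∧ ∀ y, HasDerivAt G (η y) y := by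
  obtain hempty | hne := (tsupport η).eq_empty_or_nonempty
  · obtain rfl : η = fun _ ↦ 0 := tsupport_eq_empty_iff.1 hempty
    exact ⟨fun _ ↦ 0, .zero _, fun y ↦ hasDerivAt_const y 0⟩
  set c := sInf (tsupport η)
  set d := sSup (tsupport η)
  have hcd : tsupport η ⊆ Icc c d :=
    subset_Icc_csInf_csSup hη.hasCompactSupport.bddBelow hη.hasCompactSupport.bddAbove
  have hc : a < c := (hη.tsupport_subset (hη.hasCompactSupport.sInf_mem hne)).1
  have hd : d < b := (hη.tsupport_subset (hη.hasCompactSupport.sSup_mem hne)).2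
  have hη_out {y : ℝ} (hy : y ∉ Icc c d) : η y = 0 :=
    image_eq_zero_of_notMem_tsupport fun h ↦ hy (hcd h)
  have hcont : Continuous η := hη.contDiff.continuous
  have hderiv (y : ℝ) : HasDerivAt (fun y ↦ ∫ t in a..y, η t) (η y) y :=
    intervalIntegral.integral_hasDerivAt_right (hcont.intervalIntegrable a y)
      hcont.stronglyMeasurable.stronglyMeasurableAtFilter hcont.continuousAt
  have hsupp (y : ℝ) (hy : y ∉ Icc c d) : ∫ t in a..y, η t = 0 := by
    obtain hyc | hyc := lt_or_ge y c
    · exact intervalIntegral.integral_zero_ae <| .of_forall fun t ht ↦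
        hη_out fun h ↦ (h.1.trans ht.2).not_gt (max_lt hc hyc)
    · have hdy : d < y := not_le.1 fun hyd ↦ hy ⟨hyc, hyd⟩
      rw [intervalIntegral.integral_eq_integral_of_support_subset, hη0]
      intro t ht
      have := hcd (subset_tsupport η ht)
      exact ⟨hc.trans_le this.1, this.2.trans hdy.le⟩
  refine ⟨_, ⟨?_, .intro isCompact_Icc hsupp, ?_⟩, hderiv⟩
  · have hderiv_eq : deriv (fun y ↦ ∫ t in a..y, η t) = η := funext fun y ↦ (hderiv y).deriv
    exact contDiff_infty_iff_deriv.2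
      ⟨fun y ↦ (hderiv y).differentiableAt, hderiv_eq.symm ▸ hη.contDiff⟩
  · exact (closure_minimal (fun y ↦ not_imp_comm.1 (hsupp y)) isClosed_Icc).trans
      (Icc_subset_Ioo hc hd)

end TestMap

section Laminate

lemma integrable_indicator_Ioo (a b : ℝ) : Integrable ((Ioo a b).indicator (1 : ℝ → ℝ)) :=
  (integrable_indicator_iff measurableSet_Ioo).2 (integrableOn_const measure_Ioo_lt_top.ne)

lemma IsTestMap.integrable_deriv {s : Set ℝ} {β : ℝ → ℝ} (hβ : IsTestMap s β) :
    Integrable (deriv β) :=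
  (hβ.contDiff.continuous_deriv (by simp)).integrable_of_hasCompactSupport
    hβ.hasCompactSupport.deriv

lemma IsTestMap.prod_mul {s t : Set ℝ} {f g : ℝ → ℝ} (hf : IsTestMap s f) (hg : IsTestMap t g) :
    IsTestMap (s ×ˢ t) (fun p ↦ f p.1 * g p.2) := by
  have hzero (p : ℝ × ℝ) (hp : p ∉ tsupport f ×ˢ tsupport g) : f p.1 * g p.2 = 0 := by
    rw [mem_prod, not_and_or] at hp
    exact mul_eq_zero.2
      (hp.imp image_eq_zero_of_notMem_tsupport image_eq_zero_of_notMem_tsupport)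
  exact
    ⟨(hf.contDiff.comp contDiff_fst).mul (hg.contDiff.comp contDiff_snd),
      .intro (hf.hasCompactSupport.isCompact.prod hg.hasCompactSupport.isCompact) hzero,
      (closure_minimal (fun p ↦ not_imp_comm.1 (hzero p))
        ((isClosed_tsupport f).prod (isClosed_tsupport g))).trans
        (prod_mono hf.tsupport_subset hg.tsupport_subset)⟩

lemma indicator_Ioo_comp_div {w : ℝ} (hw : 0 < w) (x : ℝ) :
    (Ioo 0 1).indicator (1 : ℝ → ℝ) (x / w) = (Ioo 0 w).indicator 1 x := by
  simp only [indicator_apply, mem_Ioo, div_pos_iff_of_pos_right hw, div_lt_one hw, Pi.one_apply]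

lemma integral_abs_comp_div_sub_indicator (β : ℝ → ℝ) {w : ℝ} (hw : 0 < w) :
    ∫ x, |β (x / w) - (Ioo 0 w).indicator 1 x| =
      w * ∫ x, |β x - (Ioo 0 1).indicator 1 x| := by
  simp only [← indicator_Ioo_comp_div hw]
  rw [Measure.integral_comp_div (fun x ↦ |β x - (Ioo 0 1).indicator 1 x|), abs_of_pos hw,
    smul_eq_mul]

lemma IsTestMap.comp_div {β : ℝ → ℝ} (hβ : IsTestMap (Ioo 0 1) β) {w : ℝ} (hw : 0 < w) :
    IsTestMap (Ioo 0 w) (fun x ↦ β (x / w)) := by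
  have hscale := hβ.comp_homeomorph (Homeomorph.mulRight₀ w⁻¹ (inv_ne_zero hw.ne'))
    (contDiff_id.mul contDiff_const)
  simp only [Homeomorph.coe_mulRight₀, ← div_eq_mul_inv] at hscale
  convert hscale using 1
  ext x
  simp [div_pos_iff_of_pos_right hw, div_lt_one hw]

lemma exists_cutoff_Ioo {δ : ℝ} (hδ : 0 < δ) :
    ∃ B : ℝ, ∀ w > 0, ∃ β : ℝ → ℝ, IsTestMap (Ioo 0 w) β ∧
      ∫ x, |β x - (Ioo 0 w).indicator 1 x| ≤ w * δ ∧ ∫ x, |deriv β x| ≤ B := by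
  obtain ⟨β, hβ, hβδ⟩ := exists_isTestMap_integral_abs_sub_indicator_le (μ := volume)
    (isOpen_Ioo (a := (0 : ℝ)) (b := 1)) measure_Ioo_lt_top.ne hδ
  refine ⟨∫ x, |deriv β x|, fun w hw ↦ ⟨_, hβ.comp_div hw, ?_, ?_⟩⟩
  · rw [integral_abs_comp_div_sub_indicator β hw]
    gcongr
  · have hderiv (x : ℝ) : |deriv (fun x ↦ β (x / w)) x| = w⁻¹ * |deriv β (x / w)| := by
      simp only [div_eq_inv_mul]
      rw [deriv_comp_mul_left, smul_eq_mul, abs_mul, abs_of_pos (inv_pos.2 hw)]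
    simp only [hderiv]
    rw [integral_const_mul, Measure.integral_comp_div (fun x ↦ |deriv β x|), abs_of_pos hw,
      smul_eq_mul, inv_mul_cancel_left₀ hw.ne']

lemma exists_sawtooth {a b δ : ℝ} (ha : 0 < a) (hab : a ≤ b) (hδ : 0 < δ) :
    ∃ G : ℝ → ℝ, IsTestMap (Ioo 0 b) G ∧
      ∫ y, |deriv G y - ((Ioo 0 a).indicator 1 y - a / b * (Ioo 0 b).indicator 1 y)| ≤ δ := by
  have hb : 0 < b := ha.trans_le hab
  obtain ⟨β, hβ, hβδ⟩ := exists_isTestMap_integral_abs_sub_indicator_le (μ := volume)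
    (isOpen_Ioo (a := (0 : ℝ)) (b := 1)) measure_Ioo_lt_top.ne
    (show 0 < δ / (2 * a) by positivity)
  have hβa := (hβ.comp_div ha).mono (Ioo_subset_Ioo_right hab)
  have hβb := (hβ.comp_div hb).const_smul (-(a / b))
  have hmean : ∫ y, (β (y / a) + -(a / b) • β (y / b)) = 0 := by
    rw [integral_add hβa.integrable hβb.integrable, integral_smul, Measure.integral_comp_div,
      Measure.integral_comp_div, abs_of_pos ha, abs_of_pos hb]
    simp only [smul_eq_mul]
    field_simp
    ring
  obtain ⟨G, hG, hGderiv⟩ := (hβa.add hβb).exists_hasDerivAt_eq hmean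
  have hint {c : ℝ} (hc : 0 < c) :
      Integrable fun y ↦ |β (y / c) - (Ioo 0 c).indicator 1 y| :=
    ((hβ.comp_div hc).integrable.sub (integrable_indicator_Ioo 0 c)).abs
  refine ⟨G, hG, ?_⟩
  calc ∫ y, |deriv G y - ((Ioo 0 a).indicator 1 y - a / b * (Ioo 0 b).indicator 1 y)|
      ≤ ∫ y, (|β (y / a) - (Ioo 0 a).indicator 1 y|
          + a / b * |β (y / b) - (Ioo 0 b).indicator 1 y|) := by
        refine integral_mono_of_nonneg (.of_forall fun _ ↦ abs_nonneg _)
          ((hint ha).add ((hint hb).const_mul _)) (.of_forall fun y ↦ ?_)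
        dsimp only
        rw [(hGderiv y).deriv, ← abs_of_pos (div_pos ha hb), ← abs_mul, abs_of_pos (div_pos ha hb),
          smul_eq_mul]
        exact (congrArg abs (by ring)).trans_le (abs_sub _ _)
    _ = 2 * a * ∫ x, |β x - (Ioo 0 1).indicator 1 x| := by
        rw [integral_add (hint ha) ((hint hb).const_mul _), integral_const_mul,
          integral_abs_comp_div_sub_indicator β ha, integral_abs_comp_div_sub_indicator β hb]
        field_simp
        ring
    _ ≤ 2 * a * (δ / (2 * a)) := by gcongr
    _ = δ := by field_simp

/-- The open rectangle `(0, w) × (0, h)`. -/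
def box (w h : ℝ) : Set (ℝ × ℝ) := Ioo 0 w ×ˢ Ioo 0 h

lemma preimage_sub_box_subset {x y w h w' h' : ℝ} (hx : 0 ≤ x) (hy : 0 ≤ y) (hw : x + w ≤ w')
    (hh : y + h ≤ h') : (fun p ↦ p - (x, y)) ⁻¹' box w h ⊆ box w' h' := by
  rintro p ⟨⟨hx₀, hx₁⟩, hy₀, hy₁⟩
  simp only [Prod.fst_sub, Prod.snd_sub] at hx₀ hx₁ hy₀ hy₁
  exact ⟨⟨by linarith, by linarith⟩, by linarith, by linarith⟩

lemma measurableSet_box (w h : ℝ) : MeasurableSet (box w h) :=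
  measurableSet_Ioo.prod measurableSet_Ioo

lemma volume_box_ne_top (w h : ℝ) : volume (box w h) ≠ ⊤ :=
  ((Metric.isBounded_Ioo 0 w).prod (Metric.isBounded_Ioo 0 h)).measure_lt_top.ne

lemma volume_real_box {w h : ℝ} (hw : 0 ≤ w) (hh : 0 ≤ h) : volume.real (box w h) = w * h := by
  rw [box, Measure.volume_eq_prod, measureReal_prod_prod, Real.volume_real_Ioo_of_le hw,
    Real.volume_real_Ioo_of_le hh, sub_zero, sub_zero]

lemma integrable_indicator_box (w h c : ℝ) : Integrable ((box w h).indicator fun _ ↦ c) :=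
  (integrable_indicator_iff (measurableSet_box w h)).2 (integrableOn_const (volume_box_ne_top w h))

lemma indicator_box_apply (w h : ℝ) (p : ℝ × ℝ) :
    (box w h).indicator (1 : ℝ × ℝ → ℝ) p =
      (Ioo 0 w).indicator 1 p.1 * (Ioo 0 h).indicator 1 p.2 :=
  indicator_prod_one

/-- The slope in the second variable of the two-phase laminate on `box w b`: it is `1 - a / b` on
the lower layer `box w a` and `-(a / b)` on the rest of `box w b`, so that its mean is zero. -/
noncomputable def laminateSlope (w a b : ℝ) (p : ℝ × ℝ) : ℝ :=
  (box w a).indicator 1 p - a / b * (box w b).indicator 1 p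

lemma integrable_laminateSlope (w a b : ℝ) : Integrable (laminateSlope w a b) :=
  (integrable_indicator_box w a 1).sub ((integrable_indicator_box w b 1).const_mul (a / b))

lemma norm_fderiv_mul_sub_smul_snd_le {f g : ℝ → ℝ} {f' g' : ℝ} {p : ℝ × ℝ}
    (hf : HasDerivAt f f' p.1) (hg : HasDerivAt g g' p.2) (s : ℝ) :
    ‖fderiv ℝ (fun p : ℝ × ℝ ↦ f p.1 * g p.2) p - s • ContinuousLinearMap.snd ℝ ℝ ℝ‖ ≤
      |f'| * |g p.2| + |f p.1 * g' - s| := by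
  have hfderiv : fderiv ℝ (fun p : ℝ × ℝ ↦ f p.1 * g p.2) p - s • ContinuousLinearMap.snd ℝ ℝ ℝ =
      (f' * g p.2) • ContinuousLinearMap.fst ℝ ℝ ℝ
        + (f p.1 * g' - s) • ContinuousLinearMap.snd ℝ ℝ ℝ := by
    have hprod : HasFDerivAt (fun p : ℝ × ℝ ↦ f p.1 * g p.2) _ p :=
      (hf.comp_hasFDerivAt p (hasFDerivAt_fst (p := p))).mul
        (hg.comp_hasFDerivAt p (hasFDerivAt_snd (𝕜 := ℝ) (p := p)))
    rw [hprod.fderiv]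
    ext <;> simp
    ring
  rw [hfderiv, ← abs_mul, ← Real.norm_eq_abs, ← Real.norm_eq_abs]
  refine (norm_add_le _ _).trans (add_le_add ?_ ?_) <;> rw [norm_smul]
  · exact mul_le_of_le_one_right (norm_nonneg _) (ContinuousLinearMap.norm_fst_le ℝ ℝ ℝ)
  · exact mul_le_of_le_one_right (norm_nonneg _) (ContinuousLinearMap.norm_snd_le ℝ ℝ ℝ)

lemma integral_norm_fderiv_mul_sub_smul_snd_le {S T : Set ℝ} {f g χ s : ℝ → ℝ}
    (hf : IsTestMap S f) (hg : IsTestMap T g) (hχ : Integrable χ) (hs : Integrable s) :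
    ∫ p : ℝ × ℝ, ‖fderiv ℝ (fun p : ℝ × ℝ ↦ f p.1 * g p.2) p
        - (χ p.1 * s p.2) • ContinuousLinearMap.snd ℝ ℝ ℝ‖ ≤
      (∫ x, |deriv f x|) * (∫ y, |g y|) + ((∫ x, |f x - χ x|) * (∫ y, |deriv g y|)
        + (∫ x, |χ x|) * ∫ y, |deriv g y - s y|) := by
  have hpoint (p : ℝ × ℝ) :
      ‖fderiv ℝ (fun p : ℝ × ℝ ↦ f p.1 * g p.2) p
          - (χ p.1 * s p.2) • ContinuousLinearMap.snd ℝ ℝ ℝ‖ ≤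
        |deriv f p.1| * |g p.2| + (|f p.1 - χ p.1| * |deriv g p.2|
          + |χ p.1| * |deriv g p.2 - s p.2|) := by
    refine (norm_fderiv_mul_sub_smul_snd_le (hf.differentiable _).hasDerivAt
      (hg.differentiable _).hasDerivAt _).trans (add_le_add_right ?_ _)
    rw [← abs_mul, ← abs_mul]
    exact (congrArg abs (by ring)).trans_le (abs_add_le _ _)
  have hi₁ : Integrable (fun p : ℝ × ℝ ↦ |deriv f p.1| * |g p.2|) :=
    hf.integrable_deriv.abs.mul_prod (hg.integrable (μ := volume)).abs
  have hi₂ : Integrable (fun p : ℝ × ℝ ↦ |f p.1 - χ p.1| * |deriv g p.2|) :=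
    (hf.integrable.sub hχ).abs.mul_prod hg.integrable_deriv.abs
  have hi₃ : Integrable (fun p : ℝ × ℝ ↦ |χ p.1| * |deriv g p.2 - s p.2|) :=
    hχ.abs.mul_prod (hg.integrable_deriv.sub hs).abs
  refine (integral_mono_of_nonneg (.of_forall fun _ ↦ norm_nonneg _) (hi₁.add (hi₂.add hi₃))
    (.of_forall hpoint)).trans_eq ?_
  rw [integral_add' hi₁ (hi₂.add hi₃), integral_add' hi₂ hi₃, Measure.volume_eq_prod,
    integral_prod_mul (fun x ↦ |deriv f x|) fun y ↦ |g y|,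
    integral_prod_mul (fun x ↦ |f x - χ x|) fun y ↦ |deriv g y|,
    integral_prod_mul (fun x ↦ |χ x|) fun y ↦ |deriv g y - s y|]

lemma exists_isTestMap_box_fderiv_near_laminate {a b δ : ℝ} (ha : 0 < a) (hab : a ≤ b)
    (hδ : 0 < δ) :
    ∃ W : ℝ, ∀ w > 0, W ≤ w → ∃ ψ : ℝ × ℝ → ℝ, IsTestMap (box w b) ψ ∧
      ∫ p, ‖fderiv ℝ ψ p - laminateSlope w a b p • ContinuousLinearMap.snd ℝ ℝ ℝ‖ ≤ w * δ := by
  obtain ⟨G, hG, hGδ⟩ := exists_sawtooth ha hab (show 0 < δ / 3 by positivity)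
  set s : ℝ → ℝ := fun y ↦ (Ioo 0 a).indicator 1 y - a / b * (Ioo 0 b).indicator 1 y
  have hs : Integrable s := (integrable_indicator_Ioo 0 a).sub
    ((integrable_indicator_Ioo 0 b).const_mul _)
  set I : ℝ := ∫ y, |deriv G y|
  have hI : 0 ≤ I := integral_nonneg fun _ ↦ abs_nonneg _
  obtain ⟨B, hB⟩ := exists_cutoff_Ioo (show 0 < δ / (3 * (I + 1)) by positivity)
  refine ⟨B * (∫ y, |G y|) / (δ / 3), fun w hw hWw ↦ ?_⟩
  obtain ⟨β, hβ, hβδ, hβB⟩ := hB w hw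
  set χ : ℝ → ℝ := (Ioo 0 w).indicator 1
  have hχ : ∫ x, |χ x| = w := by
    have habs (x : ℝ) : |χ x| = χ x := abs_of_nonneg (indicator_nonneg (fun _ _ ↦ zero_le_one) x)
    simp only [habs]
    rw [integral_indicator_one measurableSet_Ioo, Real.volume_real_Ioo_of_le hw.le, sub_zero]
  have hslope (p : ℝ × ℝ) : laminateSlope w a b p = χ p.1 * s p.2 := by
    simp only [laminateSlope, indicator_box_apply, χ, s]
    ring
  refine ⟨fun p ↦ β p.1 * G p.2, hβ.prod_mul hG, ?_⟩
  simp only [hslope]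
  calc _ ≤ (∫ x, |deriv β x|) * (∫ y, |G y|) + ((∫ x, |β x - χ x|) * I
          + (∫ x, |χ x|) * ∫ y, |deriv G y - s y|) :=
        integral_norm_fderiv_mul_sub_smul_snd_le hβ hG (integrable_indicator_Ioo 0 w) hs
    _ ≤ B * (∫ y, |G y|) + (w * (δ / (3 * (I + 1))) * (I + 1) + w * (δ / 3)) := by
        rw [hχ]
        gcongr
        linarith
    _ ≤ w * (δ / 3) + (w * (δ / 3) + w * (δ / 3)) := by
        refine add_le_add ((div_le_iff₀ (by positivity)).1 hWw) (add_le_add_left (le_of_eq ?_) _)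
        field_simp
    _ = w * δ := by ring

end Laminate

section Energy

variable {E V : Type*} [NormedAddCommGroup E] [NormedSpace ℝ E] [MeasureSpace E]
  [NormedAddCommGroup V] [NormedSpace ℝ V]
  {F : (E →L[ℝ] V) → ℝ} {A : E →L[ℝ] V} {Ω Ω' : Set E} {u v : E → V}

/-- The energy `∫ F(A + Du)` of the perturbed affine map `x ↦ A x + u x`, in excess of that of the
affine map. The excess is integrated over the whole space; for `u` a test map only the support of
`u` contributes. -/
noncomputable def excessEnergy (F : (E →L[ℝ] V) → ℝ) (A : E →L[ℝ] V) (u : E → V) : ℝ :=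
  ∫ x, (F (A + fderiv ℝ u x) - F A)

lemma IsTestMap.integrable_excess [BorelSpace E] [IsFiniteMeasureOnCompacts (volume : Measure E)]
    (hu : IsTestMap Ω u) (hF : Continuous F) (A : E →L[ℝ] V) :
    Integrable fun x ↦ F (A + fderiv ℝ u x) - F A := by
  have hcont : Continuous fun x ↦ F (A + fderiv ℝ u x) - F A :=
    (hF.comp (continuous_const.add hu.continuous_fderiv)).sub continuous_const
  exact hcont.integrable_of_hasCompactSupport
    ((hu.hasCompactSupport.fderiv ℝ).comp_left (g := fun B ↦ F (A + B) - F A) (by simp))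

lemma excessEnergy_zero (F : (E →L[ℝ] V) → ℝ) (A : E →L[ℝ] V) :
    excessEnergy F A (fun _ ↦ 0) = 0 := by
  simp [excessEnergy]

lemma excessEnergy_comp_sub_right [BorelSpace E] [(volume : Measure E).IsAddRightInvariant]
    (F : (E →L[ℝ] V) → ℝ) (A : E →L[ℝ] V) (u : E → V) (c : E) :
    excessEnergy F A (fun x ↦ u (x - c)) = excessEnergy F A u := by
  simp only [excessEnergy, fderiv_comp_sub]
  exact integral_sub_right_eq_self (fun x ↦ F (A + fderiv ℝ u x) - F A) c

lemma excessEnergy_add_of_disjoint [BorelSpace E]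
    [IsFiniteMeasureOnCompacts (volume : Measure E)]
    (hF : Continuous F) (A : E →L[ℝ] V) (hu : IsTestMap Ω u) (hv : IsTestMap Ω' v)
    (hdisj : Disjoint Ω Ω') :
    excessEnergy F A (fun x ↦ u x + v x) = excessEnergy F A u + excessEnergy F A v := by
  rw [excessEnergy, excessEnergy, excessEnergy,
    ← integral_add (hu.integrable_excess hF A) (hv.integrable_excess hF A)]
  congr with x
  rw [fderiv_fun_add (hu.differentiable x) (hv.differentiable x)]
  by_cases hx : x ∈ Ω
  · simp [hv.fderiv_eq_zero (disjoint_left.1 hdisj hx)]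
  · simp [hu.fderiv_eq_zero hx]

lemma excessEnergy_smul {t : ℝ} (hF : ∀ B, F (t • B) = t * F B) (A : E →L[ℝ] V)
    (hu : IsTestMap Ω u) :
    excessEnergy F (t • A) (fun x ↦ t • u x) = t * excessEnergy F A u := by
  rw [excessEnergy, excessEnergy, ← integral_const_mul]
  congr with x
  rw [fderiv_fun_const_smul (hu.differentiable x), ← smul_add, hF, hF, mul_sub]

lemma excessEnergy_le_add_of_lipschitzWith [BorelSpace E]
    [IsFiniteMeasureOnCompacts (volume : Measure E)] {L : ℝ≥0} (hF : LipschitzWith L F)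
    (A B : E →L[ℝ] V) (hu : IsTestMap Ω u) (hΩ : MeasurableSet Ω) (hΩfin : volume Ω ≠ ⊤) :
    excessEnergy F B u ≤
      excessEnergy F A u + volume.real Ω * (F A - F B + L * ‖A - B‖) := by
  have hconst : Integrable (Ω.indicator fun _ ↦ F A - F B + L * ‖A - B‖) :=
    (integrable_indicator_iff hΩ).2 (integrableOn_const hΩfin)
  rw [excessEnergy, excessEnergy, ← smul_eq_mul, ← integral_indicator_const _ hΩ,
    ← integral_add (hu.integrable_excess hF.continuous A) hconst]
  refine integral_mono (hu.integrable_excess hF.continuous B)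
    ((hu.integrable_excess hF.continuous A).add hconst) fun x ↦ ?_
  by_cases hx : x ∈ Ω
  · have hlip := hF.le_add_mul (B + fderiv ℝ u x) (A + fderiv ℝ u x)
    rw [dist_add_right, dist_comm, dist_eq_norm] at hlip
    simp only [indicator_of_mem hx]
    linarith
  · simp [hx, hu.fderiv_eq_zero hx]

lemma excessEnergy_comp_continuousLinearEquiv [BorelSpace E] {E' : Type*} [NormedAddCommGroup E']
    [NormedSpace ℝ E'] [MeasureSpace E'] [BorelSpace E'] (σ : E' ≃L[ℝ] E)
    (hσ : MeasurePreserving σ) (F : (E' →L[ℝ] V) → ℝ) (A : E →L[ℝ] V) (u : E → V) :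
    excessEnergy F (A ∘L σ.toContinuousLinearMap) (fun x ↦ u (σ x)) =
      excessEnergy (fun B ↦ F (B ∘L σ.toContinuousLinearMap)) A u := by
  rw [excessEnergy, excessEnergy, ← hσ.integral_comp σ.toHomeomorph.measurableEmbedding]
  congr with x
  have hfderiv : fderiv ℝ (fun x ↦ u (σ x)) x = fderiv ℝ u (σ x) ∘L σ.toContinuousLinearMap :=
    σ.comp_right_fderiv
  rw [hfderiv, ← ContinuousLinearMap.add_comp]

lemma excessEnergy_rescale [BorelSpace E] [FiniteDimensional ℝ E]
    [(volume : Measure E).IsAddHaarMeasure] {R : ℝ} (hR : R ≠ 0) (x₀ : E)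
    (F : (E →L[ℝ] V) → ℝ) (A : E →L[ℝ] V) (hu : IsTestMap Ω u) :
    excessEnergy F A (fun x ↦ R⁻¹ • u (R • (x - x₀))) =
      |(R ^ Module.finrank ℝ E)⁻¹| * excessEnergy F A u := by
  have hfderiv (x : E) :
      fderiv ℝ (fun x ↦ R⁻¹ • u (R • (x - x₀))) x = fderiv ℝ u (R • (x - x₀)) := by
    have hdiff : Differentiable ℝ fun x ↦ u (R • (x - x₀)) :=
      hu.differentiable.comp ((differentiable_id.sub_const x₀).const_smul R)
    rw [fderiv_fun_const_smul (hdiff x), fderiv_comp_sub (f := fun x ↦ u (R • x)),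
      fderiv_comp_smul, inv_smul_smul₀ hR]
  simp only [excessEnergy, hfderiv]
  rw [integral_sub_right_eq_self (fun x ↦ F (A + fderiv ℝ u (R • x)) - F A),
    Measure.integral_comp_smul volume (fun x ↦ F (A + fderiv ℝ u x) - F A), smul_eq_mul]

end Energy

section Relaxation

variable {V : Type*} [NormedAddCommGroup V] [NormedSpace ℝ V]
  {F : (ℝ × ℝ →L[ℝ] V) → ℝ} {A : ℝ × ℝ →L[ℝ] V} {L : ℝ≥0} {q r : ℝ}

/-- `RelaxedLE F A q` says that some test map `u` on a rectangle `D` satisfies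
`|D|⁻¹ ∫_D F(A + Du) ≤ q`. By Dacorogna's formula this bounds the quasiconvex envelope of `F` at
`A` by `q`. -/
def RelaxedLE (F : (ℝ × ℝ →L[ℝ] V) → ℝ) (A : ℝ × ℝ →L[ℝ] V) (q : ℝ) : Prop :=
  ∃ w > 0, ∃ h > 0, ∃ u, IsTestMap (box w h) u ∧ excessEnergy F A u ≤ w * h * (q - F A)

/-- The exchange of the two coordinates of `ℝ × ℝ`. -/
def coordSwap : (ℝ × ℝ) ≃L[ℝ] ℝ × ℝ := .prodComm ℝ ℝ ℝ

namespace RelaxedLE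

lemma refl (F : (ℝ × ℝ →L[ℝ] V) → ℝ) (A : ℝ × ℝ →L[ℝ] V) : RelaxedLE F A (F A) :=
  ⟨1, one_pos, 1, one_pos, fun _ ↦ 0, .zero _, by simp [excessEnergy_zero]⟩

lemma smul {t : ℝ} (hF : ∀ B, F (t • B) = t * F B) (ht : 0 ≤ t) (hA : RelaxedLE F A q) :
    RelaxedLE F (t • A) (t * q) := by
  obtain ⟨w, hw, h, hh, u, hu, hle⟩ := hA
  refine ⟨w, hw, h, hh, _, hu.const_smul t, ?_⟩
  rw [excessEnergy_smul hF A hu, hF]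
  linarith [mul_le_mul_of_nonneg_left hle ht]

lemma comp_swap (hA : RelaxedLE F A q) :
    RelaxedLE (fun B ↦ F (B ∘L coordSwap.toContinuousLinearMap))
      (A ∘L coordSwap.toContinuousLinearMap) q := by
  obtain ⟨w, hw, h, hh, u, hu, hle⟩ := hA
  have hbox : coordSwap.toHomeomorph ⁻¹' box w h = box h w := ext fun _ ↦ and_comm
  refine ⟨h, hh, w, hw, fun p ↦ u (coordSwap p), ?_, ?_⟩
  · exact hbox ▸ hu.comp_homeomorph coordSwap.toHomeomorph coordSwap.contDiff
  · have hswap : MeasurePreserving coordSwap := Measure.measurePreserving_swap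
    rw [excessEnergy_comp_continuousLinearEquiv coordSwap hswap, mul_comm h w]
    exact hle

end RelaxedLE

lemma IsTestMap.exists_tiling {w h : ℝ} {u : ℝ × ℝ → V} (hw : 0 ≤ w) (hu : IsTestMap (box w h) u)
    (hF : Continuous F) (A : ℝ × ℝ →L[ℝ] V) (n : ℕ) :
    ∃ v, IsTestMap (box (n * w) h) v ∧ excessEnergy F A v = n * excessEnergy F A u := by
  induction n with
  | zero => exact ⟨fun _ ↦ 0, .zero _, by simp [excessEnergy_zero]⟩
  | succ n ih =>
    obtain ⟨v, hv, hvF⟩ := ih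
    have hu' := hu.comp_sub_right (n * w, 0)
    have hle : n * w ≤ (n + 1 : ℕ) * w := by gcongr; simp
    refine ⟨fun p ↦ v p + u (p - (n * w, 0)), (hv.mono ?_).add (hu'.mono ?_), ?_⟩
    · exact prod_mono (Ioo_subset_Ioo_right hle) subset_rfl
    · exact preimage_sub_box_subset (by positivity) le_rfl (by push_cast; linarith)
        (zero_add h).le
    · rw [excessEnergy_add_of_disjoint hF A hv hu', excessEnergy_comp_sub_right, hvF]
      · push_cast
        ring
      · rw [disjoint_left]
        rintro p ⟨hx, -⟩ ⟨hx', -⟩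
        exact (sub_pos.1 hx'.1).not_gt hx.2

lemma isTestMap_laminate {w a b : ℝ} (ha : 0 ≤ a) {T : ℝ × ℝ → V}
    (hT : IsTestMap (box w (b - a)) T) {ψ : ℝ × ℝ → ℝ} (hψ : IsTestMap (box w b) ψ) (v : V) :
    IsTestMap (box w b) (fun p ↦ T (p - (0, a)) + ψ p • v) :=
  ((hT.comp_sub_right (0, a)).mono
    (preimage_sub_box_subset le_rfl ha (zero_add w).le (add_sub_cancel a b).le)).add
    (hψ.continuousLinearMap_comp (.toSpanSingleton ℝ v))

lemma laminate_integrand_le (hF : LipschitzWith L F) (A : ℝ × ℝ →L[ℝ] V) (v : V) {w a b : ℝ}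
    (ha : 0 ≤ a) (hab : a ≤ b) {T : ℝ × ℝ → V} (hT : IsTestMap (box w (b - a)) T) (ψ : ℝ × ℝ → ℝ)
    (p : ℝ × ℝ) :
    let R := (ContinuousLinearMap.snd ℝ ℝ ℝ).smulRight v
    let C := A + (a / b) • R
    F (C + (fderiv ℝ T (p - (0, a)) + (fderiv ℝ ψ p).smulRight v)) - F C ≤
      (F (A + fderiv ℝ T (p - (0, a))) - F A)
        + (box w a).indicator (fun _ ↦ F (A + R) - F A) p
        + (box w b).indicator (fun _ ↦ F A - F C) p
        + L * ‖v‖ * ‖fderiv ℝ ψ p - laminateSlope w a b p • ContinuousLinearMap.snd ℝ ℝ ℝ‖ := by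
  intro R C
  set D := fderiv ℝ T (p - (0, a))
  have hlip : F (C + (D + (fderiv ℝ ψ p).smulRight v)) ≤
      F (C + D + laminateSlope w a b p • R) + L * ‖v‖ *
        ‖fderiv ℝ ψ p - laminateSlope w a b p • ContinuousLinearMap.snd ℝ ℝ ℝ‖ := by
    refine (hF.le_add_mul _ (C + D + laminateSlope w a b p • R)).trans_eq ?_
    have hdiff : C + (D + (fderiv ℝ ψ p).smulRight v) - (C + D + laminateSlope w a b p • R) =
        (fderiv ℝ ψ p - laminateSlope w a b p • ContinuousLinearMap.snd ℝ ℝ ℝ).smulRight v := by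
      ext <;> simp [R, sub_smul]
      abel
    rw [dist_eq_norm, hdiff, ContinuousLinearMap.norm_smulRight_apply]
    ring
  suffices hphase : F (C + D + laminateSlope w a b p • R) - F C =
      (F (A + D) - F A) + (box w a).indicator (fun _ ↦ F (A + R) - F A) p
        + (box w b).indicator (fun _ ↦ F A - F C) p by linarith
  have hD (hp : p ∈ box w a ∨ p ∉ box w b) : D = 0 := by
    refine hT.fderiv_eq_zero fun hpT ↦ ?_
    exact hp.elim (fun h ↦ (sub_pos.1 hpT.2.1).not_gt h.2.2) fun h ↦ h <|
      preimage_sub_box_subset le_rfl ha (zero_add w).le (add_sub_cancel a b).le hpT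
  by_cases hpb : p ∈ box w b
  · by_cases hpa : p ∈ box w a
    · have hC : C + (1 - a / b) • R = A + R := by
        simp only [C]
        module
      simp [laminateSlope, hpa, hpb, hD (.inl hpa), hC]
    · have hC : C + D + (-(a / b)) • R = A + D := by
        simp only [C]
        module
      simp [laminateSlope, hpa, hpb, hC]
  · have hpa : p ∉ box w a := fun h ↦ hpb (prod_mono_right (Ioo_subset_Ioo_right hab) h)
    simp [laminateSlope, hpa, hpb, hD (.inr hpb)]

lemma excessEnergy_laminate_le (hF : LipschitzWith L F) (A : ℝ × ℝ →L[ℝ] V) (v : V) {w a b : ℝ}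
    (hw : 0 ≤ w) (ha : 0 ≤ a) (hab : a ≤ b) {T : ℝ × ℝ → V} (hT : IsTestMap (box w (b - a)) T)
    {ψ : ℝ × ℝ → ℝ} (hψ : IsTestMap (box w b) ψ) :
    let R := (ContinuousLinearMap.snd ℝ ℝ ℝ).smulRight v
    let C := A + (a / b) • R
    excessEnergy F C (fun p ↦ T (p - (0, a)) + ψ p • v) ≤
      excessEnergy F A T + w * a * (F (A + R) - F A) + w * b * (F A - F C)
        + L * ‖v‖ * ∫ p, ‖fderiv ℝ ψ p
          - laminateSlope w a b p • ContinuousLinearMap.snd ℝ ℝ ℝ‖ := by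
  intro R C
  have hT' := hT.comp_sub_right (0, a)
  have hfderiv (p : ℝ × ℝ) : fderiv ℝ (fun p ↦ T (p - (0, a)) + ψ p • v) p =
      fderiv ℝ T (p - (0, a)) + (fderiv ℝ ψ p).smulRight v := by
    rw [fderiv_fun_add (hT'.differentiable p) ((hψ.differentiable p).smul_const v),
      fderiv_comp_sub, fderiv_smul_const (hψ.differentiable p)]
  have hi₁ : Integrable fun p ↦ F (A + fderiv ℝ T (p - (0, a))) - F A :=
    (hT.integrable_excess hF.continuous A).comp_sub_right (0, a)
  have hi₂ := integrable_indicator_box w a (F (A + R) - F A)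
  have hi₃ := integrable_indicator_box w b (F A - F C)
  have hi₄ : Integrable fun p ↦ L * ‖v‖ *
      ‖fderiv ℝ ψ p - laminateSlope w a b p • ContinuousLinearMap.snd ℝ ℝ ℝ‖ :=
    (hψ.integrable_fderiv.sub ((integrable_laminateSlope w a b).smul_const _)).norm.const_mul _
  refine (integral_mono ((isTestMap_laminate ha hT hψ v).integrable_excess hF.continuous C)
    (((hi₁.add hi₂).add hi₃).add hi₄) fun p ↦ ?_).trans_eq ?_
  · dsimp only
    rw [hfderiv]
    exact laminate_integrand_le hF A v ha hab hT ψ p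
  · rw [integral_add' ((hi₁.add hi₂).add hi₃) hi₄, integral_add' (hi₁.add hi₂) hi₃,
      integral_add' hi₁ hi₂, integral_const_mul,
      integral_indicator_const _ (measurableSet_box w a),
      integral_indicator_const _ (measurableSet_box w b),
      volume_real_box hw ha, volume_real_box hw (ha.trans hab), smul_eq_mul, smul_eq_mul,
      integral_sub_right_eq_self (fun p ↦ F (A + fderiv ℝ T p) - F A), excessEnergy]

namespace RelaxedLE

lemma laminate_snd (hF : LipschitzWith L F) {t : ℝ} (ht₀ : 0 < t) (ht₁ : t < 1) {v : V}
    (hA : RelaxedLE F A q)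
    (hr : (1 - t) * q + t * F (A + (ContinuousLinearMap.snd ℝ ℝ ℝ).smulRight v) < r) :
    RelaxedLE F (A + t • (ContinuousLinearMap.snd ℝ ℝ ℝ).smulRight v) r := by
  obtain ⟨w₀, hw₀, h, hh, u, hu, hle⟩ := hA
  set R := (ContinuousLinearMap.snd ℝ ℝ ℝ).smulRight v
  set b := h / (1 - t)
  have ht : 0 < 1 - t := sub_pos.2 ht₁
  have hb : 0 < b := div_pos hh ht
  have hbh : b - t * b = h := by
    simp only [b]
    field_simp
  have hba : t * b / b = t := mul_div_cancel_right₀ t hb.ne'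
  have hab : t * b ≤ b := mul_le_of_le_one_left hb.le ht₁.le
  set gap := r - ((1 - t) * q + t * F (A + R)) with hgap
  have hgap_pos : 0 < gap := sub_pos.2 hr
  obtain ⟨W, hW⟩ := exists_isTestMap_box_fderiv_near_laminate (by positivity) hab
    (show 0 < b * gap / (L * ‖v‖ + 1) by positivity)
  obtain ⟨n, hn⟩ := exists_nat_gt (max W 0 / w₀)
  obtain ⟨hWw, hw⟩ : W < n * w₀ ∧ 0 < n * w₀ := max_lt_iff.1 ((div_lt_iff₀ hw₀).1 hn)
  obtain ⟨T, hT, hTu⟩ := hu.exists_tiling hw₀.le hF.continuous A n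
  obtain ⟨ψ, hψ, hψδ⟩ := hW (n * w₀) hw hWw.le
  rw [← hbh] at hT
  refine ⟨n * w₀, hw, b, hb, _, isTestMap_laminate (by positivity) hT hψ v, ?_⟩
  have hmain := excessEnergy_laminate_le hF A v hw.le (by positivity) hab hT hψ
  rw [hba] at hmain
  have hT_le : excessEnergy F A T ≤ n * w₀ * (b - t * b) * (q - F A) := by
    rw [hTu, hbh, mul_assoc (n : ℝ), mul_assoc (n : ℝ)]
    gcongr
  have hψ_le : L * ‖v‖ * ∫ p, ‖fderiv ℝ ψ p
      - laminateSlope (n * w₀) (t * b) b p • ContinuousLinearMap.snd ℝ ℝ ℝ‖ ≤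
        n * w₀ * (b * gap) := by
    calc _ ≤ (L * ‖v‖ + 1) * (n * w₀ * (b * gap / (L * ‖v‖ + 1))) := by
          gcongr
          exact le_add_of_nonneg_right zero_le_one
      _ = n * w₀ * (b * gap) := by field_simp
  rw [hgap] at hψ_le
  linarith

lemma laminate_fst (hF : LipschitzWith L F) {t : ℝ} (ht₀ : 0 < t) (ht₁ : t < 1) {v : V}
    (hA : RelaxedLE F A q)
    (hr : (1 - t) * q + t * F (A + (ContinuousLinearMap.fst ℝ ℝ ℝ).smulRight v) < r) :
    RelaxedLE F (A + t • (ContinuousLinearMap.fst ℝ ℝ ℝ).smulRight v) r := by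
  have hFσ : LipschitzWith _ fun B : ℝ × ℝ →L[ℝ] V ↦ F (B ∘L coordSwap.toContinuousLinearMap) :=
    hF.comp ((ContinuousLinearMap.compL ℝ (ℝ × ℝ) (ℝ × ℝ) V).flip
      coordSwap.toContinuousLinearMap).lipschitz
  -- precomposing twice with `coordSwap` is definitionally the identity
  exact (hA.comp_swap.laminate_snd hFσ ht₀ ht₁ hr).comp_swap

lemma exists_excessEnergy_zero_neg (hF : LipschitzWith L F)
    (hA : ∀ n : ℕ, RelaxedLE F A (F A - n)) :
    ∃ u, IsTestMap univ u ∧ excessEnergy F 0 u < 0 := by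
  obtain ⟨n, hn⟩ := exists_nat_gt (F A - F 0 + L * ‖A‖)
  obtain ⟨w, hw, h, hh, u, hu, hle⟩ := hA n
  have hchange := excessEnergy_le_add_of_lipschitzWith hF A 0 hu (measurableSet_box w h)
    (volume_box_ne_top w h)
  rw [volume_real_box hw.le hh.le, sub_zero] at hchange
  refine ⟨u, hu.mono (subset_univ _), ?_⟩
  linarith [mul_lt_mul_of_pos_left hn (mul_pos hw hh)]

end RelaxedLE

end Relaxation

section Korn

variable {K : ℝ} {Ω : Set (EuclideanSpace ℝ (Fin 2))}
  {u : EuclideanSpace ℝ (Fin 2) → EuclideanSpace ℝ (Fin 2)}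

/-- The matrix of a linear endomorphism of the Euclidean plane, so that `jacobian u x` is
`euclideanMatrix (fderiv ℝ u x)`. -/
noncomputable def euclideanMatrix (B : EuclideanSpace ℝ (Fin 2) →L[ℝ] EuclideanSpace ℝ (Fin 2)) :
    Matrix (Fin 2) (Fin 2) ℝ :=
  fun i j ↦ B (EuclideanSpace.single j 1) i

/-- The integrand `K ‖M + Mᵀ‖ - |M₀₁| - |M₁₀|`, with the symmetric part measured by a norm for
which the values at antidiagonal matrices are simple. Its integral over gradients would be
nonnegative if the symmetric gradient controlled the off-diagonal derivatives. -/
noncomputable def kornDefect (K : ℝ) (M : Matrix (Fin 2) (Fin 2) ℝ) : ℝ :=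
  K * (|M 0 0| + |M 1 1| + |M 0 1 + M 1 0|) - |M 0 1| - |M 1 0|

lemma exists_lipschitzWith_kornDefect_euclideanMatrix (K : ℝ) :
    ∃ L, LipschitzWith L fun B ↦ kornDefect K (euclideanMatrix B) := by
  have hentry (i j : Fin 2) : LipschitzWith _ fun B ↦ euclideanMatrix B i j :=
    ((EuclideanSpace.proj i : EuclideanSpace ℝ (Fin 2) →L[ℝ] ℝ) ∘L
      .apply ℝ (EuclideanSpace ℝ (Fin 2)) (EuclideanSpace.single j 1)).lipschitz
  have habs {L : ℝ≥0} {f : (EuclideanSpace ℝ (Fin 2) →L[ℝ] EuclideanSpace ℝ (Fin 2)) → ℝ}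
      (hf : LipschitzWith L f) : LipschitzWith (1 * L) fun B ↦ |f B| :=
    lipschitzWith_one_norm.comp hf
  exact ⟨_, (((lipschitzWith_smul K).comp (((habs (hentry 0 0)).add (habs (hentry 1 1))).add
    (habs ((hentry 0 1).add (hentry 1 0))))).sub (habs (hentry 0 1))).sub (habs (hentry 1 0))⟩

/-- The coordinates of the Euclidean plane, as a linear isomorphism onto `ℝ × ℝ`. -/
noncomputable def planeEquiv : EuclideanSpace ℝ (Fin 2) ≃L[ℝ] ℝ × ℝ :=
  (EuclideanSpace.equiv (Fin 2) ℝ).trans (.finTwoArrow ℝ ℝ)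

lemma measurePreserving_planeEquiv : MeasurePreserving planeEquiv :=
  (volume_preserving_finTwoArrow ℝ).comp (PiLp.volume_preserving_ofLp (Fin 2))

/-- `kornDefect` of the matrix of a linear map whose domain is read in the coordinates
`planeEquiv`. -/
noncomputable def kornIntegrand (K : ℝ) (B : ℝ × ℝ →L[ℝ] EuclideanSpace ℝ (Fin 2)) : ℝ :=
  kornDefect K (euclideanMatrix (B ∘L planeEquiv.toContinuousLinearMap))

lemma exists_lipschitzWith_kornIntegrand (K : ℝ) : ∃ L, LipschitzWith L (kornIntegrand K) := by
  obtain ⟨L, hL⟩ := exists_lipschitzWith_kornDefect_euclideanMatrix K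
  exact ⟨_, hL.comp ((ContinuousLinearMap.compL ℝ (EuclideanSpace ℝ (Fin 2)) (ℝ × ℝ)
    (EuclideanSpace ℝ (Fin 2))).flip planeEquiv.toContinuousLinearMap).lipschitz⟩

lemma kornIntegrand_smul {t : ℝ} (ht : 0 ≤ t) (B : ℝ × ℝ →L[ℝ] EuclideanSpace ℝ (Fin 2)) :
    kornIntegrand K (t • B) = t * kornIntegrand K B := by
  simp only [kornIntegrand, kornDefect, euclideanMatrix, ContinuousLinearMap.smul_comp,
    _root_.smul_apply, PiLp.smul_apply, smul_eq_mul, ← mul_add, abs_mul, abs_of_nonneg ht]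
  ring

/-- The linear map with matrix `!![0, a; b, 0]`. -/
noncomputable def antidiagMap (a b : ℝ) : ℝ × ℝ →L[ℝ] EuclideanSpace ℝ (Fin 2) :=
  (ContinuousLinearMap.snd ℝ ℝ ℝ).smulRight !₂[a, 0] +
    (ContinuousLinearMap.fst ℝ ℝ ℝ).smulRight !₂[0, b]

lemma smul_antidiagMap (t a b : ℝ) : t • antidiagMap a b = antidiagMap (t * a) (t * b) := by
  ext i <;> fin_cases i <;> simp [antidiagMap]

lemma antidiagMap_add_smul_smulRight_snd (a b c t : ℝ) :
    antidiagMap a b + t • (ContinuousLinearMap.snd ℝ ℝ ℝ).smulRight !₂[c, 0] =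
      antidiagMap (a + t * c) b := by
  ext i <;> fin_cases i <;> simp [antidiagMap]

lemma antidiagMap_add_smul_smulRight_fst (a b c t : ℝ) :
    antidiagMap a b + t • (ContinuousLinearMap.fst ℝ ℝ ℝ).smulRight !₂[0, c] =
      antidiagMap a (b + t * c) := by
  ext i <;> fin_cases i <;> simp [antidiagMap]

lemma kornIntegrand_antidiagMap (K a b : ℝ) :
    kornIntegrand K (antidiagMap a b) = K * |a + b| - |a| - |b| := by
  simp [kornIntegrand, kornDefect, euclideanMatrix, planeEquiv, antidiagMap]

namespace RelaxedLE

lemma laminate_antidiagMap_snd {a a' b c q r t : ℝ} (ht₀ : 0 < t) (ht₁ : t < 1)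
    (hc : (1 - t) * a + t * a' = c) (h : RelaxedLE (kornIntegrand K) (antidiagMap a b) q)
    (hr : (1 - t) * q + t * (K * |a' + b| - |a'| - |b|) < r) :
    RelaxedLE (kornIntegrand K) (antidiagMap c b) r := by
  obtain ⟨L, hL⟩ := exists_lipschitzWith_kornIntegrand K
  have hc' : c = a + t * (a' - a) := by linarith
  have ha' : antidiagMap a b + (ContinuousLinearMap.snd ℝ ℝ ℝ).smulRight !₂[a' - a, 0] =
      antidiagMap a' b := by
    simpa using antidiagMap_add_smul_smulRight_snd a b (a' - a) 1
  rw [hc', ← antidiagMap_add_smul_smulRight_snd]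
  exact h.laminate_snd hL ht₀ ht₁ (by rwa [ha', kornIntegrand_antidiagMap])

lemma laminate_antidiagMap_fst {a b b' c q r t : ℝ} (ht₀ : 0 < t) (ht₁ : t < 1)
    (hc : (1 - t) * b + t * b' = c) (h : RelaxedLE (kornIntegrand K) (antidiagMap a b) q)
    (hr : (1 - t) * q + t * (K * |a + b'| - |a| - |b'|) < r) :
    RelaxedLE (kornIntegrand K) (antidiagMap a c) r := by
  obtain ⟨L, hL⟩ := exists_lipschitzWith_kornIntegrand K
  have hc' : c = b + t * (b' - b) := by linarith
  have hb' : antidiagMap a b + (ContinuousLinearMap.fst ℝ ℝ ℝ).smulRight !₂[0, b' - b] =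
      antidiagMap a b' := by
    simpa using antidiagMap_add_smul_smulRight_fst a b (b' - b) 1
  rw [hc', ← antidiagMap_add_smul_smulRight_fst]
  exact h.laminate_fst hL ht₀ ht₁ (by rwa [hb', kornIntegrand_antidiagMap])

lemma antidiagMap_one_sub_one {q : ℝ} (h : RelaxedLE (kornIntegrand K) (antidiagMap 1 1) q) :
    RelaxedLE (kornIntegrand K) (antidiagMap 1 1) (q - 1) := by
  have h₂₂ : RelaxedLE (kornIntegrand K) (antidiagMap 2 2) (2 * q) := by
    simpa [smul_antidiagMap] using h.smul (kornIntegrand_smul two_pos.le) two_pos.le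
  have h₁₂ : RelaxedLE (kornIntegrand K) (antidiagMap 1 2) (3 / 2 * q - 3 / 4) :=
    h₂₂.laminate_antidiagMap_snd (a' := -2) (t := 1 / 4) (by norm_num) (by norm_num) (by norm_num)
      (by norm_num; linarith)
  exact h₁₂.laminate_antidiagMap_fst (b' := -1) (t := 1 / 3) (by norm_num) (by norm_num)
    (by norm_num) (by norm_num; linarith)

lemma antidiagMap_one_sub_nat (K : ℝ) (n : ℕ) :
    RelaxedLE (kornIntegrand K) (antidiagMap 1 1) (kornIntegrand K (antidiagMap 1 1) - n) := by
  induction n with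
  | zero => simpa using refl (kornIntegrand K) (antidiagMap 1 1)
  | succ n ih => simpa [sub_sub] using ih.antidiagMap_one_sub_one

end RelaxedLE

lemma exists_integral_kornDefect_neg (hΩ : IsOpen Ω) (hne : Ω.Nonempty) (K : ℝ) :
    ∃ u, IsTestMap Ω u ∧ ∫ x, kornDefect K (jacobian u x) < 0 := by
  obtain ⟨L, hL⟩ := exists_lipschitzWith_kornIntegrand K
  obtain ⟨v, hv, hvneg⟩ :=
    RelaxedLE.exists_excessEnergy_zero_neg hL (RelaxedLE.antidiagMap_one_sub_nat K)
  have hv' : IsTestMap univ fun x ↦ v (planeEquiv x) :=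
    hv.comp_homeomorph planeEquiv.toHomeomorph planeEquiv.contDiff
  obtain ⟨R, hR, x₀, hu⟩ := hv'.exists_rescale hΩ hne
  refine ⟨_, hu, ?_⟩
  have hvE := excessEnergy_comp_continuousLinearEquiv planeEquiv measurePreserving_planeEquiv
    (fun B ↦ kornDefect K (euclideanMatrix B)) 0 v
  rw [ContinuousLinearMap.zero_comp] at hvE
  have huE := excessEnergy_rescale hR.ne' x₀ (fun B ↦ kornDefect K (euclideanMatrix B)) 0 hv'
  rw [hvE] at huE
  have hneg : excessEnergy (fun B ↦ kornDefect K (euclideanMatrix B)) 0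
      (fun x ↦ R⁻¹ • v (planeEquiv (R • (x - x₀)))) < 0 := by
    rw [huE]
    exact mul_neg_of_pos_of_neg (by positivity) hvneg
  simpa [excessEnergy, kornDefect, euclideanMatrix, jacobian] using hneg

lemma abs_apply_le_frobNorm (M : Matrix (Fin 2) (Fin 2) ℝ) (i j : Fin 2) :
    |M i j| ≤ frobNorm M := by
  refine Real.abs_le_sqrt ?_
  calc M i j ^ 2 ≤ ∑ j, M i j ^ 2 :=
        Finset.single_le_sum (f := fun j ↦ M i j ^ 2) (fun _ _ ↦ sq_nonneg _) (Finset.mem_univ j)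
    _ ≤ ∑ i, ∑ j, M i j ^ 2 :=
        Finset.single_le_sum (f := fun i ↦ ∑ j, M i j ^ 2)
          (fun _ _ ↦ Finset.sum_nonneg fun _ _ ↦ sq_nonneg _) (Finset.mem_univ i)

lemma frobNorm_symmPart_le (M : Matrix (Fin 2) (Fin 2) ℝ) :
    frobNorm ((1 / 2 : ℝ) • (M + Mᵀ)) ≤ |M 0 0| + |M 1 1| + |M 0 1 + M 1 0| := by
  refine Real.sqrt_le_iff.2 ⟨by positivity, ?_⟩
  simp only [Fin.sum_univ_two, Matrix.smul_apply, Matrix.add_apply, transpose_apply, smul_eq_mul]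
  have h₀₁ := mul_nonneg (abs_nonneg (M 0 0)) (abs_nonneg (M 1 1))
  have h₀ := mul_nonneg (abs_nonneg (M 0 0)) (abs_nonneg (M 0 1 + M 1 0))
  have h₁ := mul_nonneg (abs_nonneg (M 1 1)) (abs_nonneg (M 0 1 + M 1 0))
  nlinarith [sq_abs (M 0 0), sq_abs (M 1 1), sq_abs (M 0 1 + M 1 0)]

lemma continuous_frobNorm : Continuous frobNorm := by
  unfold frobNorm
  fun_prop

lemma integral_norm_le_two_mul_integral_norm_sub {α V : Type*} [MeasurableSpace α] {μ : Measure α}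
    [IsFiniteMeasure μ] [NormedAddCommGroup V] [NormedSpace ℝ V] [CompleteSpace V] {f : α → V}
    (hf : Integrable f μ) (hf0 : ∫ x, f x ∂μ = 0) (c : V) :
    ∫ x, ‖f x‖ ∂μ ≤ 2 * ∫ x, ‖f x - c‖ ∂μ := by
  have hc : ∫ _, ‖c‖ ∂μ ≤ ∫ x, ‖f x - c‖ ∂μ := by
    have hint := norm_integral_le_integral_norm (μ := μ) fun x ↦ f x - c
    rw [integral_sub hf (integrable_const c), hf0, zero_sub, norm_neg, integral_const,
      norm_smul, Real.norm_of_nonneg measureReal_nonneg] at hint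
    rwa [integral_const, smul_eq_mul]
  have hfc : Integrable (fun x ↦ ‖f x - c‖) μ := (hf.sub (integrable_const c)).norm
  calc ∫ x, ‖f x‖ ∂μ ≤ ∫ x, (‖f x - c‖ + ‖c‖) ∂μ :=
        integral_mono hf.norm (hfc.add (integrable_const _)) fun x ↦ norm_le_norm_sub_add (f x) c
    _ ≤ 2 * ∫ x, ‖f x - c‖ ∂μ := by
        rw [integral_add hfc (integrable_const _)]
        linarith

namespace IsTestMap

lemma continuous_jacobian (hu : IsTestMap Ω u) : Continuous (jacobian u) :=
  continuous_matrix fun i _ ↦ (EuclideanSpace.proj i).continuous.comp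
    (hu.continuous_fderiv.clm_apply continuous_const)

lemma jacobian_eq_zero (hu : IsTestMap Ω u) {x : EuclideanSpace ℝ (Fin 2)} (hx : x ∉ Ω) :
    jacobian u x = 0 := by
  ext i j
  simp [jacobian, hu.fderiv_eq_zero hx]

lemma integrableOn_comp_jacobian (hu : IsTestMap Ω u) (hfin : volume Ω ≠ ⊤)
    {G : Matrix (Fin 2) (Fin 2) ℝ → ℝ} (hG : Continuous G) :
    IntegrableOn (fun x ↦ G (jacobian u x)) Ω := by
  have hcont : Continuous fun x ↦ G (jacobian u x) - G 0 :=
    (hG.comp hu.continuous_jacobian).sub continuous_const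
  have hsupp : HasCompactSupport fun x ↦ G (jacobian u x) - G 0 :=
    (hu.hasCompactSupport.fderiv ℝ).comp_left
      (g := fun B ↦ G (euclideanMatrix B) - G 0) (sub_self _)
  exact ((hcont.integrable_of_hasCompactSupport hsupp).integrableOn.add
    (integrableOn_const (C := G 0) hfin)).congr_fun_ae (.of_forall fun x ↦ sub_add_cancel _ _)

lemma setIntegral_jacobian_eq_zero (hu : IsTestMap Ω u) (i j : Fin 2) :
    ∫ x in Ω, jacobian u x i j = 0 := by
  rw [setIntegral_eq_integral_of_forall_compl_eq_zero fun x hx ↦ by rw [hu.jacobian_eq_zero hx,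
    Matrix.zero_apply]]
  let π : EuclideanSpace ℝ (Fin 2) →L[ℝ] ℝ := EuclideanSpace.proj i
  have hentry (x) : jacobian u x i j =
      fderiv ℝ (fun x ↦ π (u x)) x (EuclideanSpace.single j 1) :=
    congr($((π.hasFDerivAt.comp x (hu.differentiable x).hasFDerivAt).fderiv.symm)
      (EuclideanSpace.single j 1))
  simp only [hentry]
  exact (hu.continuousLinearMap_comp π).integral_fderiv_eq_zero _

lemma setIntegral_abs_jacobian_le (hu : IsTestMap Ω u) (hfin : volume Ω ≠ ⊤)
    (A : Matrix (Fin 2) (Fin 2) ℝ) (i j : Fin 2) :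
    ∫ x in Ω, |jacobian u x i j| ≤ 2 * ∫ x in Ω, frobNorm (jacobian u x - A) := by
  have : IsFiniteMeasure (volume.restrict Ω) := isFiniteMeasure_restrict.2 hfin
  have hentry {G : Matrix (Fin 2) (Fin 2) ℝ → ℝ} (hG : Continuous G) :=
    hu.integrableOn_comp_jacobian hfin hG
  calc ∫ x in Ω, |jacobian u x i j| ≤ 2 * ∫ x in Ω, |jacobian u x i j - A i j| :=
        integral_norm_le_two_mul_integral_norm_sub (hentry (G := (· i j)) (by fun_prop))
          (hu.setIntegral_jacobian_eq_zero i j) (A i j)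
    _ ≤ 2 * ∫ x in Ω, frobNorm (jacobian u x - A) := by
        gcongr 2 * ?_
        exact integral_mono (hentry (G := fun M ↦ |M i j - A i j|) (by fun_prop))
          (hentry (G := fun M ↦ frobNorm (M - A))
            (continuous_frobNorm.comp (continuous_id.sub continuous_const)))
          fun x ↦ abs_apply_le_frobNorm (jacobian u x - A) i j

lemma mul_setIntegral_frobNorm_symmPart_le (hu : IsTestMap Ω u) (hfin : volume Ω ≠ ⊤) (C : ℝ) :
    4 * (C * ∫ x in Ω, frobNorm ((1 / 2 : ℝ) • (jacobian u x + (jacobian u x)ᵀ))) ≤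
      (∫ x, kornDefect (4 * |C|) (jacobian u x)) +
        (∫ x in Ω, |jacobian u x 0 1|) + ∫ x in Ω, |jacobian u x 1 0| := by
  have hint {G : Matrix (Fin 2) (Fin 2) ℝ → ℝ} (hG : Continuous G) :=
    hu.integrableOn_comp_jacobian hfin hG
  have hsym := hint (G := fun M ↦ |M 0 0| + |M 1 1| + |M 0 1 + M 1 0|) (by fun_prop)
  have h₀₁ := hint (G := fun M ↦ |M 0 1|) (by fun_prop)
  have h₁₀ := hint (G := fun M ↦ |M 1 0|) (by fun_prop)
  have hdefect : ∫ x, kornDefect (4 * |C|) (jacobian u x) =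
      4 * |C| * (∫ x in Ω,
        (|jacobian u x 0 0| + |jacobian u x 1 1| + |jacobian u x 0 1 + jacobian u x 1 0|)) -
        (∫ x in Ω, |jacobian u x 0 1|) - ∫ x in Ω, |jacobian u x 1 0| := by
    rw [← integral_const_mul, ← integral_sub (hsym.const_mul _) h₀₁,
      ← integral_sub (f := fun x ↦ _ - _) ((hsym.const_mul _).sub h₀₁) h₁₀]
    exact (setIntegral_eq_integral_of_forall_compl_eq_zero fun x hx ↦ by
      simp [kornDefect, hu.jacobian_eq_zero hx]).symm
  rw [hdefect, sub_right_comm, sub_add_cancel, sub_add_cancel, mul_assoc]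
  have hfrob : Continuous fun M : Matrix (Fin 2) (Fin 2) ℝ ↦
      frobNorm ((1 / 2 : ℝ) • (M + Mᵀ)) :=
    continuous_frobNorm.comp (by fun_prop)
  have hle : ∫ x in Ω, frobNorm ((1 / 2 : ℝ) • (jacobian u x + (jacobian u x)ᵀ)) ≤ ∫ x in Ω,
      (|jacobian u x 0 0| + |jacobian u x 1 1| + |jacobian u x 0 1 + jacobian u x 1 0|) :=
    integral_mono (hint hfrob) hsym fun x ↦ frobNorm_symmPart_le (jacobian u x)
  gcongr
  · exact integral_nonneg fun x ↦ Real.sqrt_nonneg _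
  · exact le_abs_self C

end IsTestMap

end Korn

theorem korn_second_inequality_fails_L1_general {Ω : Set (EuclideanSpace ℝ (Fin 2))}
    (hΩ : IsOpen Ω) (hne : Ω.Nonempty) (hfin : volume Ω ≠ ⊤) (C : ℝ) :
    ∃ u : EuclideanSpace ℝ (Fin 2) → EuclideanSpace ℝ (Fin 2),
      ContDiff ℝ (⊤ : ℕ∞) u ∧ HasCompactSupport u ∧ tsupport u ⊆ Ω ∧
        C * ∫ x in Ω, frobNorm ((1 / 2 : ℝ) • (jacobian u x + (jacobian u x)ᵀ)) <
          ⨅ A : Matrix (Fin 2) (Fin 2) ℝ, ∫ x in Ω, frobNorm (jacobian u x - A) := by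
  obtain ⟨u, hu, hneg⟩ := exists_integral_kornDefect_neg hΩ hne (4 * |C|)
  refine ⟨u, hu.contDiff, hu.hasCompactSupport, hu.tsupport_subset, ?_⟩
  have hsym := hu.mul_setIntegral_frobNorm_symmPart_le hfin C
  have hinf : ((∫ x in Ω, |jacobian u x 0 1|) + ∫ x in Ω, |jacobian u x 1 0|) / 4 ≤
      ⨅ A : Matrix (Fin 2) (Fin 2) ℝ, ∫ x in Ω, frobNorm (jacobian u x - A) := by
    refine le_ciInf fun A ↦ ?_
    have h₀₁ := hu.setIntegral_abs_jacobian_le hfin A 0 1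
    have h₁₀ := hu.setIntegral_abs_jacobian_le hfin A 1 0
    linarith
  linarith

end

/-- (Ornstein) Failure of Korn's second inequality in `L¹`:
with `Ω` the open unit ball of `ℝ²`, there is no constant `C > 0` such that for all smooth
compactly supported `u` with support in `Ω`,
`inf_{Aᵀ = -A} ∫_Ω ‖Du - A‖_F ≤ C ∫_Ω ‖(Du + Duᵀ)/2‖_F`. -/
theorem korn_second_inequality_fails_L1 :
    ¬ ∃ C > (0 : ℝ),
      ∀ u : EuclideanSpace ℝ (Fin 2) → EuclideanSpace ℝ (Fin 2),
        ContDiff ℝ (⊤ : ℕ∞) u → HasCompactSupport u →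
        tsupport u ⊆ Metric.ball (0 : EuclideanSpace ℝ (Fin 2)) 1 →
        sInf {r : ℝ | ∃ A : Matrix (Fin 2) (Fin 2) ℝ, Aᵀ = -A ∧
            r = ∫ x in Metric.ball (0 : EuclideanSpace ℝ (Fin 2)) 1,
              frobNorm (jacobian u x - A)} ≤
          C * ∫ x in Metric.ball (0 : EuclideanSpace ℝ (Fin 2)) 1,
            frobNorm ((1 / 2 : ℝ) • (jacobian u x + (jacobian u x)ᵀ)) := by
  rintro ⟨C, -, H⟩
  obtain ⟨u, hu, hcpt, hsupp, hlt⟩ := korn_second_inequality_fails_L1_general Metric.isOpen_ball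
    (Metric.nonempty_ball.2 one_pos) measure_ball_lt_top.ne C
  refine ((H u hu hcpt hsupp).trans_lt hlt).not_ge (le_csInf ⟨_, 0, by simp, rfl⟩ ?_)
  rintro _ ⟨A, -, rfl⟩
  have hbdd : BddBelow (Set.range fun A ↦ ∫ x in Metric.ball 0 1, frobNorm (jacobian u x - A)) :=
    ⟨0, Set.forall_mem_range.2 fun _ ↦ integral_nonneg fun _ ↦ Real.sqrt_nonneg _⟩
  exact ciInf_le hbdd A
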